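/- Let ν ≥ 1 be an integer and s ≥ 1 a real number. There exists r₀ > 0 (depending on s and ν) such that for all r ≥ r₀: inf_{p∈ℕ, p≥1} (νp)^{νps} · r^{-νp} ≤ exp(−(s/(4νe))·r^{1/s}). -/

import Mathlib

/-!
Substitute `t = r ^ (1 / s)`. For `m = ν * p` the term under the infimum is `(m / t) ^ (m * s)`,
which is at most `exp (-(s * m))` as soon as `m ≤ t / e`. The largest multiple `m` of `ν` below
`t / e`, the minimizer over real `m`, exceeds `t / e - ν`; so the infimum is at most
`exp (-(s * (t / e - ν)))`, and the loss `s * ν` is absorbed by any rate `c < s / e`.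
-/

open Filter

theorem exists_pos_natCast_mul_mem_Ioc {ν x : ℝ} (hν : 0 < ν) (hx : ν ≤ x) :
    ∃ p : ℕ, 0 < p ∧ ν * p ∈ Set.Ioc (x - ν) x := by
  refine ⟨⌊x / ν⌋₊, Nat.floor_pos.2 ((one_le_div hν).2 hx), ?_, ?_⟩
  · have h : x < (⌊x / ν⌋₊ + 1) * ν := (div_lt_iff₀ hν).1 (Nat.lt_floor_add_one _)
    linarith
  · have h : ⌊x / ν⌋₊ * ν ≤ x :=
      (le_div_iff₀ hν).1 (Nat.floor_le (div_nonneg (hν.le.trans hx) hν.le))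
    linarith

theorem rpow_mul_rpow_rpow_neg_le_exp {m s t : ℝ} (hm : 0 ≤ m) (hs : 0 ≤ s) (ht : 0 < t)
    (hmt : m ≤ t / Real.exp 1) :
    m ^ (m * s) * (t ^ s) ^ (-m) ≤ Real.exp (-(s * m)) := by
  have hratio : m / t ≤ Real.exp (-1) := by
    rw [div_le_iff₀ ht, Real.exp_neg, inv_mul_eq_div]
    exact hmt
  calc m ^ (m * s) * (t ^ s) ^ (-m)
      = (m / t) ^ (m * s) := by
        rw [Real.div_rpow hm ht.le, ← Real.rpow_mul ht.le, mul_neg, mul_comm s m,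
          Real.rpow_neg ht.le, div_eq_mul_inv]
    _ ≤ Real.exp (-1) ^ (m * s) := by gcongr
    _ = Real.exp (-(s * m)) := by
        rw [← Real.exp_mul, neg_one_mul, mul_comm m s]

theorem ciInf_rpow_mul_rpow_rpow_neg_le_exp {ν s t : ℝ} (hν : 0 < ν) (hs : 0 ≤ s)
    (ht : ν ≤ t / Real.exp 1) :
    (⨅ p : {p : ℕ // 0 < p}, (ν * p.1) ^ (ν * p.1 * s) * (t ^ s) ^ (-(ν * p.1)))
      ≤ Real.exp (-(s * (t / Real.exp 1 - ν))) := by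
  have ht₀ : 0 < t := (div_pos_iff_of_pos_right (Real.exp_pos 1)).1 (hν.trans_le ht)
  have hbdd : BddBelow (Set.range fun p : {p : ℕ // 0 < p} ↦
      (ν * p.1) ^ (ν * p.1 * s) * (t ^ s) ^ (-(ν * p.1))) :=
    ⟨0, Set.forall_mem_range.2 fun p ↦ by positivity⟩
  obtain ⟨p, hp, hlower, hupper⟩ := exists_pos_natCast_mul_mem_Ioc hν ht
  calc _ ≤ (ν * p) ^ (ν * p * s) * (t ^ s) ^ (-(ν * p)) := ciInf_le hbdd ⟨p, hp⟩
    _ ≤ Real.exp (-(s * (ν * p))) :=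
        rpow_mul_rpow_rpow_neg_le_exp (by positivity) hs ht₀ hupper
    _ ≤ Real.exp (-(s * (t / Real.exp 1 - ν))) := by gcongr

theorem stmt_2_general {ν s c : ℝ} (hν : 0 < ν) (hs : 0 < s)
    (hc : c < s / Real.exp 1) :
    ∀ᶠ r : ℝ in atTop,
      (⨅ p : {p : ℕ // 0 < p}, (ν * p.1) ^ (ν * p.1 * s) * r ^ (-(ν * p.1)))
        ≤ Real.exp (-c * r ^ (1 / s)) := by
  have hroot : Tendsto (fun r : ℝ ↦ r ^ (1 / s)) atTop atTop :=
    tendsto_rpow_atTop (one_div_pos.2 hs)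
  filter_upwards [eventually_ge_atTop 0, hroot.eventually_ge_atTop (ν * Real.exp 1),
    hroot.eventually_ge_atTop (s * ν / (s / Real.exp 1 - c))] with r hr hνr hcr
  set t := r ^ (1 / s)
  have hrt : r = t ^ s := by
    rw [← Real.rpow_mul hr, one_div_mul_cancel hs.ne', Real.rpow_one]
  have hrate : c * t ≤ s * (t / Real.exp 1 - ν) := by
    rw [div_le_iff₀' (sub_pos.2 hc)] at hcr
    linear_combination hcr
  rw [hrt]
  refine (ciInf_rpow_mul_rpow_rpow_neg_le_exp hν hs.le
    ((le_div_iff₀ (Real.exp_pos 1)).2 hνr)).trans (Real.exp_le_exp.2 ?_)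
  linarith

theorem stmt_2 (ν : ℕ) (hν : 1 ≤ ν) (s : ℝ) (hs : 1 ≤ s) :
    ∃ r₀ : ℝ, 0 < r₀ ∧ ∀ r : ℝ, r₀ ≤ r →
      (⨅ p : {p : ℕ // 0 < p},
          ((ν * p.1 : ℝ)) ^ ((ν * p.1 : ℝ) * s) * r ^ (-(ν * p.1 : ℝ)))
        ≤ Real.exp (-(s / (4 * ν * Real.exp 1)) * r ^ (1 / s)) := by
  have hν' : (1 : ℝ) ≤ ν := Nat.one_le_cast.2 hν
  have hrate : s / (4 * ν * Real.exp 1) < s / Real.exp 1 :=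
    div_lt_div_of_pos_left (by positivity) (Real.exp_pos 1)
      (lt_mul_of_one_lt_left (Real.exp_pos 1) (by linarith))
  obtain ⟨r₀, h⟩ := eventually_atTop.1
    (stmt_2_general (zero_lt_one.trans_le hν') (zero_lt_one.trans_le hs) hrate)
  exact ⟨max r₀ 1, by positivity, fun r hr ↦ h r (le_of_max_le_left hr)⟩
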